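/- Let {X_t}_{t≥1} be identically distributed, pairwise asymptotically independent positive random variables and {Θ_t}_{t≥1} positive random variables with the sequence {Θ_t} independent of the sequence {X_t}. Suppose X_(∞) = Σ_{t=1}^∞ Θ_t X_t is finite almost surely and has a regularly varying tail of index −α for some α>0, and {Θ_t} satisfies the RW moment conditions for α. Then Σ_{t=1}^∞ P[Θ_t X_t > x] ~ P[X_(∞) > x] as x→∞. -/

import Mathlib

open MeasureTheory ProbabilityTheory Filter Topology
open scoped ENNReal

noncomputable section

/-- A function, positive on `(0,∞)`, is regularly varying at infinity with index `ρ`: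
for every `t > 0`, `f(tx)/f(x) → t^ρ` as `x → ∞`. -/
def RegVarying (f : ℝ → ℝ) (ρ : ℝ) : Prop :=
  (∀ x : ℝ, 0 < x → 0 < f x) ∧
    ∀ t : ℝ, 0 < t → Tendsto (fun x : ℝ => f (t * x) / f x) atTop (nhds (t ^ ρ))

variable {Ω : Type*} [MeasurableSpace Ω]

/-- The (possibly infinite) moment `E[Θ^r]`. -/
def momE (P : Measure Ω) (Θ : Ω → ℝ) (r : ℝ) : ℝ≥0∞ :=
  ∫⁻ ω, ENNReal.ofReal (Θ ω ^ r) ∂P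

/-- The RW moment conditions for the sequence `{Θ_t}` and the index `α`:
if `0 < α < 1`, then `Σ_t E[Θ_t^{α+ε} + Θ_t^{α-ε}] < ∞` for some `ε ∈ (0,α)`;
if `α ≥ 1`, then `Σ_t (E[Θ_t^{α+ε} + Θ_t^{α-ε}])^{1/(α+ε)} < ∞` for some `ε ∈ (0,α)`. -/
def RWConditions (P : Measure Ω) (Θ : ℕ → Ω → ℝ) (α : ℝ) : Prop :=
  ∃ ε : ℝ, 0 < ε ∧ ε < α ∧
    ((α < 1 ∧ (∑' t : ℕ, (momE P (Θ t) (α + ε) + momE P (Θ t) (α - ε))) ≠ ⊤) ∨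
      (1 ≤ α ∧
        (∑' t : ℕ, (momE P (Θ t) (α + ε) + momE P (Θ t) (α - ε)) ^ (1 / (α + ε))) ≠ ⊤))

/-- The tail `P[Z > x]` of a random variable, as a real number. -/
def tailP (P : Measure Ω) (Z : Ω → ℝ) (x : ℝ) : ℝ := (P {ω | x < Z ω}).toReal

/-- `X` and `Y` are asymptotically independent:
`P[X > x, Y > x] / P[X > x] → 0` and `P[X > x, Y > x] / P[Y > x] → 0` as `x → ∞`. -/
def AsympIndep (P : Measure Ω) (X Y : Ω → ℝ) : Prop :=
  Tendsto (fun x : ℝ =>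
      (P {ω | x < X ω ∧ x < Y ω}).toReal / (P {ω | x < X ω}).toReal) atTop (nhds 0) ∧
    Tendsto (fun x : ℝ =>
      (P {ω | x < X ω ∧ x < Y ω}).toReal / (P {ω | x < Y ω}).toReal) atTop (nhds 0)

/-!
The single big jump principle: `∑ Θ_t X_t` exceeds a large level `x` essentially only when a single
term does. If `G` is the tail of the series, `G (c y) ≥ P[Θ₀ > c] P[X₀ > y]`, so Potter's bound for
`G` passes to the tail of `X₀`: `P[X₀ > y] ≤ K G x ((x / y) ^ β + (x / y) ^ γ)` for `γ < α < β`,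
large `x` and every `y > 0`. This has two consequences. By dominated convergence, two given terms
are jointly large with probability `o(G x)`. By the layer cake formula,
`E[min (Θ_t X_t) x ^ p] ≤ C G x x ^ p (E Θ_t ^ β + E Θ_t ^ γ)` for `p > β`; by Minkowski's and
Markov's inequalities the terms outside a finite set `s` then contribute at most `r s * G x`, where
`r s → 0` by the RW conditions. What is left is a finite sum, for which inclusion-exclusion and
regular variation give the upper and lower bounds.
-/

section Potter

/-- The weight `u ^ β + u ^ γ` of Potter's bound; its mean at `u = Θ` is the sum of moments in the
RW conditions. -/
def potterWeight (β γ u : ℝ) : ℝ := u ^ β + u ^ γ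

/-- Potter's bound for `F` relative to `G`: `F y ≤ K (x / y) ^ β G x + K (x / y) ^ γ G x` for all
large `x` and, unlike in the usual formulation, for *every* `y > 0`. -/
def PotterDominated (β γ : ℝ) (F G : ℝ → ℝ≥0∞) : Prop :=
  ∃ K ≠ ∞, ∀ᶠ x in atTop, ∀ y, 0 < y →
    F y ≤ K * G x * ENNReal.ofReal (potterWeight β γ (x / y))

variable {β γ : ℝ}

@[fun_prop]
lemma measurable_potterWeight : Measurable (potterWeight β γ) := by
  unfold potterWeight
  fun_prop

lemma potterWeight_nonneg {u : ℝ} (hu : 0 ≤ u) : 0 ≤ potterWeight β γ u :=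
  add_nonneg (Real.rpow_nonneg hu β) (Real.rpow_nonneg hu γ)

lemma potterWeight_mul_le {c u : ℝ} (hc : 0 ≤ c) (hu : 0 ≤ u) :
    potterWeight β γ (c * u) ≤ potterWeight β γ c * potterWeight β γ u := by
  simp only [potterWeight, Real.mul_rpow hc hu]
  have h₁ : 0 ≤ c ^ β * u ^ γ := by positivity
  have h₂ : 0 ≤ c ^ γ * u ^ β := by positivity
  linarith

lemma potterWeight_mul_le_rpow_mul {c u : ℝ} (hγβ : γ ≤ β) (hc : 1 ≤ c) (hu : 0 ≤ u) :
    potterWeight β γ (c * u) ≤ c ^ β * potterWeight β γ u := by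
  have hc₀ : 0 ≤ c := zero_le_one.trans hc
  simp only [potterWeight, Real.mul_rpow hc₀ hu, mul_add]
  gcongr

lemma rpow_le_potterWeight {a u : ℝ} (hu : 0 < u) (hγ : γ ≤ a) (hβ : a ≤ β) :
    u ^ a ≤ potterWeight β γ u := by
  rcases le_total 1 u with hu₁ | hu₁
  · exact (Real.rpow_le_rpow_of_exponent_le hu₁ hβ).trans
      (le_add_of_nonneg_right (by positivity))
  · exact (Real.rpow_le_rpow_of_exponent_ge hu hu₁ hγ).trans
      (le_add_of_nonneg_left (by positivity))

lemma RegVarying.exists_forall_two_mul_bounds {g : ℝ → ℝ} {α : ℝ} (h : RegVarying g (-α))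
    (hγ : γ < α) (hβ : α < β) :
    ∃ x₀, 0 < x₀ ∧ ∀ x, x₀ ≤ x → g (2 * x) ≤ 2 ^ (-γ) * g x ∧ 2 ^ (-β) * g x ≤ g (2 * x) := by
  have hlim := h.2 2 two_pos
  have hupper := hlim.eventually_lt_const
    (Real.rpow_lt_rpow_of_exponent_lt one_lt_two (neg_lt_neg hγ))
  have hlower := hlim.eventually_const_lt
    (Real.rpow_lt_rpow_of_exponent_lt one_lt_two (neg_lt_neg hβ))
  obtain ⟨x₁, hx₁⟩ := eventually_atTop.1 (hupper.and hlower)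
  refine ⟨max x₁ 1, by positivity, fun x hx => ?_⟩
  have hgx : 0 < g x := h.1 x (by linarith [le_max_right x₁ 1])
  obtain ⟨hu, hl⟩ := hx₁ x ((le_max_left _ _).trans hx)
  exact ⟨((div_lt_iff₀ hgx).1 hu).le, ((lt_div_iff₀ hgx).1 hl).le⟩

lemma apply_two_pow_mul_le {g : ℝ → ℝ} {c x₀ x : ℝ} (hc : 0 ≤ c) (hx₀ : 0 ≤ x₀)
    (h : ∀ x, x₀ ≤ x → g (2 * x) ≤ c * g x) (hx : x₀ ≤ x) (k : ℕ) :
    g (2 ^ k * x) ≤ c ^ k * g x := by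
  induction k with
  | zero => simp
  | succ k ih =>
    have hk : x₀ ≤ 2 ^ k * x :=
      hx.trans (le_mul_of_one_le_left (hx₀.trans hx) (one_le_pow₀ one_le_two))
    calc g (2 ^ (k + 1) * x) = g (2 * (2 ^ k * x)) := by ring_nf
      _ ≤ c * g (2 ^ k * x) := h _ hk
      _ ≤ c * (c ^ k * g x) := by gcongr
      _ = c ^ (k + 1) * g x := by ring

lemma two_rpow_neg_pow (s : ℝ) (k : ℕ) : ((2 : ℝ) ^ (-s)) ^ k = ((2 ^ k : ℝ) ^ s)⁻¹ := by
  rw [Real.rpow_neg two_pos.le, inv_pow, Real.rpow_pow_comm two_pos.le]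

lemma le_rpow_mul_of_two_mul_le {g : ℝ → ℝ} {x₀ x y : ℝ} (hg : Antitone g) (hγ : 0 ≤ γ)
    (hx₀ : 0 < x₀) (h : ∀ x, x₀ ≤ x → g (2 * x) ≤ 2 ^ (-γ) * g x) (hgx : 0 ≤ g x)
    (hx : x₀ ≤ x) (hxy : x ≤ y) :
    g y ≤ (2 * (x / y)) ^ γ * g x := by
  have hx' : 0 < x := hx₀.trans_le hx
  have hy' : 0 < y := hx'.trans_le hxy
  obtain ⟨k, hk, hk'⟩ := exists_nat_pow_near ((one_le_div hx').2 hxy) one_lt_two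
  have hscale : ((2 : ℝ) ^ k)⁻¹ ≤ 2 * (x / y) := by
    rw [inv_le_iff_one_le_mul₀ (by positivity), mul_comm 2, mul_assoc, ← pow_succ',
      ← inv_div y x, inv_mul_eq_div, one_le_div (by positivity)]
    exact hk'.le
  calc g y ≤ g (2 ^ k * x) := hg ((le_div_iff₀ hx').1 hk)
    _ ≤ (2 ^ (-γ)) ^ k * g x := apply_two_pow_mul_le (by positivity) hx₀.le h hx k
    _ = ((2 ^ k)⁻¹ : ℝ) ^ γ * g x := by
      rw [two_rpow_neg_pow, Real.inv_rpow (by positivity)]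
    _ ≤ (2 * (x / y)) ^ γ * g x := by gcongr

lemma le_rpow_mul_of_le_two_mul {g : ℝ → ℝ} {x₀ x y : ℝ} (hg : Antitone g) (hβ : 0 ≤ β)
    (hx₀ : 0 < x₀) (h : ∀ x, x₀ ≤ x → 2 ^ (-β) * g x ≤ g (2 * x)) (hgx : 0 ≤ g x)
    (hy : x₀ ≤ y) (hyx : y ≤ x) :
    g y ≤ (2 * (x / y)) ^ β * g x := by
  have hy' : 0 < y := hx₀.trans_le hy
  obtain ⟨k, hk, hk'⟩ := exists_nat_pow_near ((one_le_div hy').2 hyx) one_lt_two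
  have hscale : (2 : ℝ) ^ (k + 1) ≤ 2 * (x / y) := by
    rw [pow_succ']
    gcongr
  have hiter : (2 ^ (-β)) ^ (k + 1) * g y ≤ g (2 ^ (k + 1) * y) := by
    have := apply_two_pow_mul_le (g := fun z => -g z) (c := 2 ^ (-β)) (by positivity) hx₀.le
      (fun z hz => by simpa using h z hz) hy (k + 1)
    simpa using this
  calc g y ≤ ((2 : ℝ) ^ (k + 1)) ^ β * g (2 ^ (k + 1) * y) := by
        rwa [two_rpow_neg_pow, inv_mul_le_iff₀ (by positivity)] at hiter
    _ ≤ ((2 : ℝ) ^ (k + 1)) ^ β * g x := by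
      gcongr
      exact hg ((div_lt_iff₀ hy').1 hk').le
    _ ≤ (2 * (x / y)) ^ β * g x := by gcongr

lemma RegVarying.exists_forall_le_potterWeight_mul {g : ℝ → ℝ} {α : ℝ} (h : RegVarying g (-α))
    (hg : Antitone g) (hγ₀ : 0 ≤ γ) (hγ : γ < α) (hβ : α < β) :
    ∃ x₀, 0 < x₀ ∧ ∀ x, x₀ ≤ x → ∀ y, x₀ ≤ y →
      g y ≤ potterWeight β γ (2 * (x / y)) * g x := by
  obtain ⟨x₀, hx₀, hbounds⟩ := h.exists_forall_two_mul_bounds hγ hβ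
  refine ⟨x₀, hx₀, fun x hx y hy => ?_⟩
  have hx' : 0 < x := hx₀.trans_le hx
  have hy' : 0 < y := hx₀.trans_le hy
  have hgx : 0 ≤ g x := (h.1 x hx').le
  rcases le_total x y with hxy | hyx
  · refine (le_rpow_mul_of_two_mul_le hg hγ₀ hx₀ (fun z hz => (hbounds z hz).1) hgx hx hxy).trans ?_
    exact mul_le_mul_of_nonneg_right (le_add_of_nonneg_left (by positivity)) hgx
  · refine (le_rpow_mul_of_le_two_mul hg (by linarith) hx₀ (fun z hz => (hbounds z hz).2) hgx hy
      hyx).trans ?_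
    exact mul_le_mul_of_nonneg_right (le_add_of_nonneg_right (by positivity)) hgx

-- Below the threshold `x₀` of Potter's bound, compare `g y ≤ C` with `g x₀`.
lemma RegVarying.exists_forall_pos_le_potterWeight_mul {g : ℝ → ℝ} {α C : ℝ}
    (h : RegVarying g (-α)) (hg : Antitone g) (hC : ∀ y, g y ≤ C) (hγ₀ : 0 ≤ γ) (hγ : γ < α)
    (hβ : α < β) :
    ∃ K, 0 ≤ K ∧ ∀ᶠ x in atTop, ∀ y, 0 < y → g y ≤ K * g x * potterWeight β γ (x / y) := by
  obtain ⟨x₀, hx₀, hbound⟩ := h.exists_forall_le_potterWeight_mul hg hγ₀ hγ hβ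
  have hg₀ : 0 < g x₀ := h.1 x₀ hx₀
  have hCg : 1 ≤ C / g x₀ := (one_le_div hg₀).2 (hC x₀)
  have hw₂ : 0 ≤ potterWeight β γ 2 := potterWeight_nonneg two_pos.le
  refine ⟨C / g x₀ * potterWeight β γ 2, by positivity, ?_⟩
  filter_upwards [eventually_ge_atTop x₀] with x hx y hy
  have hx' : 0 < x := hx₀.trans_le hx
  have hgx : 0 < g x := h.1 x hx'
  have hfactor {z : ℝ} (hz : x₀ ≤ z) : g z ≤ potterWeight β γ 2 * potterWeight β γ (x / z) * g x :=
    (hbound x hx z hz).trans <| mul_le_mul_of_nonneg_right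
      (potterWeight_mul_le two_pos.le (div_nonneg hx'.le (hx₀.trans_le hz).le)) hgx.le
  have hwy : 0 ≤ potterWeight β γ (x / y) := potterWeight_nonneg (by positivity)
  rcases le_total x₀ y with hxy | hyx
  · calc g y ≤ 1 * (potterWeight β γ 2 * potterWeight β γ (x / y) * g x) := by
          rw [one_mul]
          exact hfactor hxy
      _ ≤ C / g x₀ * (potterWeight β γ 2 * potterWeight β γ (x / y) * g x) := by gcongr
      _ = _ := by ring
  · have hmono : potterWeight β γ (x / x₀) ≤ potterWeight β γ (x / y) := by
      have : 0 ≤ β := by linarith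
      unfold potterWeight
      gcongr
    calc g y ≤ C / g x₀ * g x₀ := by
          rw [div_mul_cancel₀ C hg₀.ne']
          exact hC y
      _ ≤ C / g x₀ * (potterWeight β γ 2 * potterWeight β γ (x / y) * g x) := by
          gcongr
          exact (hfactor le_rfl).trans (by gcongr)
      _ = _ := by ring

lemma RegVarying.potterDominated {G : ℝ → ℝ≥0∞} {α : ℝ} {C : ℝ≥0∞}
    (h : RegVarying (fun x => (G x).toReal) (-α)) (hG : Antitone G) (hC : C ≠ ∞)
    (hGC : ∀ x, G x ≤ C) (hγ₀ : 0 ≤ γ) (hγ : γ < α) (hβ : α < β) :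
    PotterDominated β γ G G := by
  have hG_top (x : ℝ) : G x ≠ ∞ := ne_top_of_le_ne_top hC (hGC x)
  obtain ⟨K, hK, hbound⟩ := h.exists_forall_pos_le_potterWeight_mul
    (fun x y hxy => ENNReal.toReal_mono (hG_top x) (hG hxy))
    (fun x => ENNReal.toReal_mono hC (hGC x)) hγ₀ hγ hβ
  refine ⟨ENNReal.ofReal K, ENNReal.ofReal_ne_top, ?_⟩
  filter_upwards [hbound] with x hx y hy
  rw [← ENNReal.ofReal_toReal (hG_top x), ← ENNReal.ofReal_toReal (hG_top y),
    ← ENNReal.ofReal_mul hK, ← ENNReal.ofReal_mul (by positivity)]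
  exact ENNReal.ofReal_le_ofReal (hx y hy)

lemma PotterDominated.of_mul_le {F G H : ℝ → ℝ≥0∞} (h : PotterDominated β γ G H) {q : ℝ≥0∞}
    (hq : q ≠ 0) (hq' : q ≠ ∞) {c : ℝ} (hc : 0 < c) (hFG : ∀ y, 0 < y → q * F y ≤ G (c * y)) :
    PotterDominated β γ F H := by
  obtain ⟨K, hK, hbound⟩ := h
  refine ⟨q⁻¹ * (K * ENNReal.ofReal (potterWeight β γ c⁻¹)), by finiteness, ?_⟩
  filter_upwards [hbound, eventually_gt_atTop 0] with x hx hx₀ y hy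
  have hweight : ENNReal.ofReal (potterWeight β γ (x / (c * y))) ≤
      ENNReal.ofReal (potterWeight β γ c⁻¹) * ENNReal.ofReal (potterWeight β γ (x / y)) := by
    rw [← ENNReal.ofReal_mul (potterWeight_nonneg (by positivity)),
      show x / (c * y) = c⁻¹ * (x / y) by field_simp]
    exact ENNReal.ofReal_le_ofReal (potterWeight_mul_le (by positivity) (by positivity))
  calc F y = q⁻¹ * (q * F y) := by rw [← mul_assoc, ENNReal.inv_mul_cancel hq hq', one_mul]
    _ ≤ q⁻¹ * (K * H x * (ENNReal.ofReal (potterWeight β γ c⁻¹) *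
          ENNReal.ofReal (potterWeight β γ (x / y)))) := by
      grw [hFG y hy, hx (c * y) (by positivity), hweight]
    _ = _ := by ring

end Potter

section Moments

variable {P : Measure Ω}

lemma lintegral_potterWeight {Z : Ω → ℝ} {β γ : ℝ} (hZ : Measurable Z) (hpos : ∀ᵐ ω ∂P, 0 < Z ω) :
    ∫⁻ ω, ENNReal.ofReal (potterWeight β γ (Z ω)) ∂P = momE P Z β + momE P Z γ := by
  rw [momE, momE, ← lintegral_add_left (by fun_prop)]
  refine lintegral_congr_ae ?_
  filter_upwards [hpos] with ω hω
  exact ENNReal.ofReal_add (by positivity) (by positivity)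

lemma momE_le_add {Z : Ω → ℝ} {a β γ : ℝ} (hZ : Measurable Z) (hpos : ∀ᵐ ω ∂P, 0 < Z ω)
    (hγ : γ ≤ a) (hβ : a ≤ β) :
    momE P Z a ≤ momE P Z β + momE P Z γ := by
  rw [← lintegral_potterWeight hZ hpos]
  refine lintegral_mono_ae ?_
  filter_upwards [hpos] with ω hω
  exact ENNReal.ofReal_le_ofReal (rpow_le_potterWeight hω hγ hβ)

lemma momE_max_le {Z Z' : Ω → ℝ} (hZ : Measurable Z) (r : ℝ) :
    momE P (fun ω => max (Z ω) (Z' ω)) r ≤ momE P Z r + momE P Z' r := by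
  rw [momE, momE, momE, ← lintegral_add_left (by fun_prop)]
  refine lintegral_mono fun ω => ?_
  rcases max_choice (Z ω) (Z' ω) with h | h <;> rw [h]
  exacts [le_self_add, le_add_self]

lemma tsum_momE_rpow_ne_top_of_le {ι : Type*} {Z : ι → Ω → ℝ} {β γ β' γ' s : ℝ}
    (hZ : ∀ i, Measurable (Z i)) (hpos : ∀ i, ∀ᵐ ω ∂P, 0 < Z i ω) (hγ : γ ≤ γ') (hγβ : γ' ≤ β')
    (hβ : β' ≤ β) (hs : 0 ≤ s) (h : ∑' i, (momE P (Z i) β + momE P (Z i) γ) ^ s ≠ ∞) :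
    ∑' i, (momE P (Z i) β' + momE P (Z i) γ') ^ s ≠ ∞ := by
  have hle (i : ι) :
      momE P (Z i) β' + momE P (Z i) γ' ≤ 2 * (momE P (Z i) β + momE P (Z i) γ) := by
    rw [two_mul]
    exact add_le_add (momE_le_add (hZ i) (hpos i) (hγ.trans hγβ) hβ)
      (momE_le_add (hZ i) (hpos i) hγ (hγβ.trans hβ))
  refine ne_top_of_le_ne_top
    (ENNReal.mul_ne_top (ENNReal.rpow_ne_top_of_nonneg hs (ENNReal.ofNat_ne_top (n := 2))) h) ?_
  rw [← ENNReal.tsum_mul_left]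
  refine ENNReal.tsum_le_tsum fun i => ?_
  rw [← ENNReal.mul_rpow_of_nonneg _ _ hs]
  exact ENNReal.rpow_le_rpow (hle i) hs

-- Both cases leave room to move the exponents towards `α`, so that the larger one stays below the
-- order `p` of Minkowski's inequality (`p = 1` if `α < 1`, and `p = α + ε` otherwise).
lemma RWConditions.exists_exponents {Θ : ℕ → Ω → ℝ} {α : ℝ} (h : RWConditions P Θ α)
    (hΘ : ∀ t, Measurable (Θ t)) (hpos : ∀ t, ∀ᵐ ω ∂P, 0 < Θ t ω) :
    ∃ p β γ : ℝ, 1 ≤ p ∧ 0 ≤ γ ∧ γ < α ∧ α < β ∧ β < p ∧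
      ∑' t, (momE P (Θ t) β + momE P (Θ t) γ) ^ (1 / p) ≠ ∞ := by
  obtain ⟨ε, hε, hεα, ⟨hα, h⟩ | ⟨hα, h⟩⟩ := h
  · have hη : 0 < min ε ((1 - α) / 2) := lt_min hε (by linarith)
    have hηε : min ε ((1 - α) / 2) ≤ ε := min_le_left _ _
    have hηα : min ε ((1 - α) / 2) ≤ (1 - α) / 2 := min_le_right _ _
    refine ⟨1, α + min ε ((1 - α) / 2), α - min ε ((1 - α) / 2), le_rfl, by linarith, by linarith,
      by linarith, by linarith, ?_⟩
    exact tsum_momE_rpow_ne_top_of_le (β := α + ε) (γ := α - ε) hΘ hpos (by linarith)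
      (by linarith) (by linarith) (by norm_num) (by simpa using h)
  · refine ⟨α + ε, α + ε / 2, α - ε / 2, by linarith, by linarith, by linarith, by linarith,
      by linarith, ?_⟩
    exact tsum_momE_rpow_ne_top_of_le hΘ hpos (by linarith) (by linarith) (by linarith)
      (by positivity) h

end Moments

/-- The tail `P[f > x]` of an extended nonnegative random variable, as a function of a real level;
at negative levels it takes the value at `0`. -/
def upperTail (P : Measure Ω) (f : Ω → ℝ≥0∞) (x : ℝ) : ℝ≥0∞ := P {ω | ENNReal.ofReal x < f ω}

/-- The `p`-th moment of the truncation `min f x`; unlike that of `f`, it is finite for `p` above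
the tail index. -/
def truncMoment (P : Measure Ω) (f : Ω → ℝ≥0∞) (p x : ℝ) : ℝ≥0∞ :=
  ∫⁻ ω, min (f ω) (ENNReal.ofReal x) ^ p ∂P

section UpperTail

variable {P : Measure Ω} {f g : Ω → ℝ≥0∞}

lemma antitone_upperTail (P : Measure Ω) (f : Ω → ℝ≥0∞) : Antitone (upperTail P f) :=
  fun _ _ hab => measure_mono fun _ hω => (ENNReal.ofReal_le_ofReal hab).trans_lt hω

lemma upperTail_mono_ae (h : f ≤ᵐ[P] g) (x : ℝ) : upperTail P f x ≤ upperTail P g x := by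
  refine measure_mono_ae ?_
  filter_upwards [h] with ω hω hx
  exact lt_of_lt_of_le hx hω

lemma upperTail_congr_ae (h : f =ᵐ[P] g) : upperTail P f = upperTail P g :=
  funext fun x => (upperTail_mono_ae h.le x).antisymm (upperTail_mono_ae h.ge x)

lemma upperTail_ne_top [IsFiniteMeasure P] (x : ℝ) : upperTail P f x ≠ ∞ := measure_ne_top _ _

lemma upperTail_ofReal (Y : Ω → ℝ) {x : ℝ} (hx : 0 ≤ x) :
    upperTail P (fun ω => ENNReal.ofReal (Y ω)) x = P {ω | x < Y ω} := by
  simp only [upperTail, ENNReal.ofReal_lt_ofReal_iff_of_nonneg hx]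

end UpperTail

section TruncatedMoments

variable {P : Measure Ω} {ι : Type*} {p x : ℝ}

lemma lintegral_rpow_finsetSum_le {f : ι → Ω → ℝ≥0∞} (hf : ∀ i, Measurable (f i)) (hp : 1 ≤ p)
    (s : Finset ι) :
    ∫⁻ ω, (∑ i ∈ s, f i ω) ^ p ∂P ≤ (∑ i ∈ s, (∫⁻ ω, f i ω ^ p ∂P) ^ (1 / p)) ^ p := by
  classical
  have hp₀ : 0 < p := zero_lt_one.trans_le hp
  rw [← ENNReal.rpow_inv_le_iff hp₀, ← one_div]
  induction s using Finset.induction_on with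
  | empty => simp [ENNReal.zero_rpow_of_pos hp₀, hp₀]
  | insert i s hi ih =>
    simp only [Finset.sum_insert hi]
    grw [← ih]
    exact ENNReal.lintegral_Lp_add_le (hf i).aemeasurable
      (Finset.measurable_fun_sum s fun j _ => hf j).aemeasurable hp

lemma lintegral_rpow_tsum_le [Countable ι] {f : ι → Ω → ℝ≥0∞} (hf : ∀ i, Measurable (f i))
    (hp : 1 ≤ p) :
    ∫⁻ ω, (∑' i, f i ω) ^ p ∂P ≤ (∑' i, (∫⁻ ω, f i ω ^ p ∂P) ^ (1 / p)) ^ p := by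
  have hp₀ : 0 ≤ p := zero_le_one.trans hp
  have hsup (ω : Ω) : (∑' i, f i ω) ^ p = ⨆ s : Finset ι, (∑ i ∈ s, f i ω) ^ p := by
    rw [ENNReal.tsum_eq_iSup_sum]
    exact (ENNReal.monotone_rpow_of_nonneg hp₀).map_iSup_of_continuousAt
      ENNReal.continuous_rpow_const.continuousAt (by simp [zero_lt_one.trans_le hp])
  have hmono : Monotone fun (s : Finset ι) ω => (∑ i ∈ s, f i ω) ^ p := fun s t hst ω =>
    ENNReal.rpow_le_rpow (Finset.sum_le_sum_of_subset hst) hp₀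
  simp only [hsup]
  rw [lintegral_iSup_directed
    (fun s => ((Finset.measurable_fun_sum s fun i _ => hf i).pow_const p).aemeasurable)
    hmono.directed_le]
  refine iSup_le fun s => (lintegral_rpow_finsetSum_le hf hp s).trans ?_
  gcongr
  exact ENNReal.sum_le_tsum s

lemma tsum_rpow_le_rpow_tsum (a : ι → ℝ≥0∞) (hp : 1 ≤ p) : ∑' i, a i ^ p ≤ (∑' i, a i) ^ p := by
  have hsplit (b : ℝ≥0∞) : b ^ p = b * b ^ (p - 1) := by
    conv_rhs => rw [← ENNReal.rpow_one b, ← ENNReal.rpow_mul, one_mul,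
      ← ENNReal.rpow_add_of_nonneg _ _ zero_le_one (sub_nonneg.2 hp), add_sub_cancel]
  rw [hsplit (∑' i, a i), ← ENNReal.tsum_mul_right]
  refine ENNReal.tsum_le_tsum fun i => ?_
  rw [hsplit]
  gcongr
  exact ENNReal.le_tsum i

lemma min_tsum_le_tsum_min (v : ι → ℝ≥0∞) (a : ℝ≥0∞) : min (∑' i, v i) a ≤ ∑' i, min (v i) a := by
  by_cases h : ∃ i, a ≤ v i
  · obtain ⟨i, hi⟩ := h
    calc min (∑' i, v i) a ≤ min (v i) a := by rw [min_eq_right hi]; exact min_le_right _ _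
      _ ≤ ∑' i, min (v i) a := ENNReal.le_tsum i
  · push Not at h
    simp only [min_eq_left (h _).le]
    exact min_le_left _ _

lemma truncMoment_tsum_le [Countable ι] {V : ι → Ω → ℝ≥0∞} (hV : ∀ i, Measurable (V i))
    (hp : 1 ≤ p) :
    truncMoment P (fun ω => ∑' i, V i ω) p x ≤ (∑' i, truncMoment P (V i) p x ^ (1 / p)) ^ p := by
  refine (lintegral_mono fun ω => ?_).trans
    (lintegral_rpow_tsum_le (fun i => (hV i).min measurable_const) hp)
  exact ENNReal.rpow_le_rpow (min_tsum_le_tsum_min _ _) (zero_le_one.trans hp)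

lemma upperTail_le_of_truncMoment_le {f : Ω → ℝ≥0∞} {M : ℝ≥0∞} (hf : Measurable f) (hp : 0 < p)
    (hx : 0 < x) (h : truncMoment P f p x ≤ M * ENNReal.ofReal x ^ p) : upperTail P f x ≤ M := by
  have hxp₀ : ENNReal.ofReal x ^ p ≠ 0 := by simp [hx]
  have hxp : ENNReal.ofReal x ^ p ≠ ∞ := ENNReal.rpow_ne_top_of_nonneg hp.le ENNReal.ofReal_ne_top
  calc upperTail P f x
      ≤ P {ω | ENNReal.ofReal x ^ p ≤ min (f ω) (ENNReal.ofReal x) ^ p} :=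
        measure_mono fun ω hω => ENNReal.rpow_le_rpow (le_min (le_of_lt hω) le_rfl) hp.le
    _ ≤ truncMoment P f p x / ENNReal.ofReal x ^ p :=
        meas_ge_le_lintegral_div ((hf.min measurable_const).pow_const p).aemeasurable hxp₀ hxp
    _ ≤ M := ENNReal.div_le_of_le_mul h

variable {V : ι → Ω → ℝ≥0∞} {m : ι → ℝ≥0∞} {M : ℝ≥0∞}

lemma upperTail_tsum_le_of_truncMoment_le [Countable ι] (hV : ∀ i, Measurable (V i)) (hp : 1 ≤ p)
    (hx : 0 < x) (h : ∀ i, truncMoment P (V i) p x ≤ m i * M * ENNReal.ofReal x ^ p) :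
    upperTail P (fun ω => ∑' i, V i ω) x ≤ (∑' i, m i ^ (1 / p)) ^ p * M := by
  have hp₀ : 0 < p := zero_lt_one.trans_le hp
  refine upperTail_le_of_truncMoment_le (Measurable.tsum hV) hp₀ hx ?_
  calc truncMoment P (fun ω => ∑' i, V i ω) p x
      ≤ (∑' i, (m i * (M * ENNReal.ofReal x ^ p)) ^ (1 / p)) ^ p := by
        grw [truncMoment_tsum_le hV hp]
        gcongr with i
        rw [← mul_assoc]
        exact h i
    _ = (∑' i, m i ^ (1 / p)) ^ p * M * ENNReal.ofReal x ^ p := by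
      simp only [ENNReal.mul_rpow_of_nonneg _ _ (one_div_nonneg.2 hp₀.le), ENNReal.tsum_mul_right,
        ENNReal.mul_rpow_of_nonneg _ _ hp₀.le, ← ENNReal.rpow_mul, one_div_mul_cancel hp₀.ne',
        ENNReal.rpow_one, mul_one_div_cancel hp₀.ne', mul_assoc]

lemma tsum_upperTail_le_of_truncMoment_le (hV : ∀ i, Measurable (V i)) (hp : 1 ≤ p)
    (hx : 0 < x) (h : ∀ i, truncMoment P (V i) p x ≤ m i * M * ENNReal.ofReal x ^ p) :
    ∑' i, upperTail P (V i) x ≤ (∑' i, m i ^ (1 / p)) ^ p * M := by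
  have hp₀ : 0 < p := zero_lt_one.trans_le hp
  calc ∑' i, upperTail P (V i) x ≤ ∑' i, m i * M :=
        ENNReal.tsum_le_tsum fun i => upperTail_le_of_truncMoment_le (hV i) hp₀ hx (h i)
    _ = (∑' i, (m i ^ (1 / p)) ^ p) * M := by
      simp only [ENNReal.tsum_mul_right, ← ENNReal.rpow_mul, one_div_mul_cancel hp₀.ne',
        ENNReal.rpow_one]
    _ ≤ (∑' i, m i ^ (1 / p)) ^ p * M := by
      gcongr
      exact tsum_rpow_le_rpow_tsum _ hp

end TruncatedMoments

section LayerCake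

variable {P : Measure Ω} {f : Ω → ℝ≥0∞} {β p x : ℝ}

lemma truncMoment_eq_lintegral_upperTail (hf : Measurable f) (hp : 0 < p) :
    truncMoment P f p x =
      ENNReal.ofReal p * ∫⁻ s in Set.Ioo 0 x, upperTail P f s * ENNReal.ofReal (s ^ (p - 1)) := by
  have hmin_top (ω : Ω) : min (f ω) (ENNReal.ofReal x) ≠ ∞ :=
    ne_top_of_le_ne_top ENNReal.ofReal_ne_top (min_le_right _ _)
  have hreal (ω : Ω) : min (f ω) (ENNReal.ofReal x) ^ p =
      ENNReal.ofReal ((min (f ω) (ENNReal.ofReal x)).toReal ^ p) := by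
    rw [← ENNReal.ofReal_rpow_of_nonneg ENNReal.toReal_nonneg hp.le,
      ENNReal.ofReal_toReal (hmin_top ω)]
  have hlt {s : ℝ} (hs : 0 ≤ s) : P {ω | s < (min (f ω) (ENNReal.ofReal x)).toReal} =
      if s < x then upperTail P f s else 0 := by
    simp only [← ENNReal.ofReal_lt_iff_lt_toReal hs (hmin_top _), lt_min_iff,
      ENNReal.ofReal_lt_ofReal_iff_of_nonneg hs]
    split_ifs with hsx <;> simp [upperTail, hsx]
  simp only [truncMoment, hreal]
  rw [lintegral_rpow_eq_lintegral_meas_lt_mul P (.of_forall fun ω => ENNReal.toReal_nonneg)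
    (hf.min measurable_const).ennreal_toReal.aemeasurable hp, ← Set.Iio_inter_Ioi,
    ← setLIntegral_indicator measurableSet_Iio]
  congr 1
  refine setLIntegral_congr_fun measurableSet_Ioi fun s hs => ?_
  simp only [hlt (le_of_lt hs), Set.indicator_apply, Set.mem_Iio]
  split_ifs <;> simp

lemma lintegral_Ioo_rpow_sub_one {q : ℝ} (hq : 0 < q) (hx : 0 ≤ x) :
    ∫⁻ s in Set.Ioo 0 x, ENNReal.ofReal (s ^ (q - 1)) = ENNReal.ofReal (x ^ q / q) := by
  have hint : IntervalIntegrable (fun s : ℝ => s ^ (q - 1)) volume 0 x :=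
    intervalIntegral.intervalIntegrable_rpow' (by linarith)
  rw [← ofReal_integral_eq_lintegral_ofReal
    ((intervalIntegrable_iff_integrableOn_Ioo_of_le hx).1 hint),
    ← integral_Ioc_eq_integral_Ioo,
    ← intervalIntegral.integral_of_le hx, integral_rpow (Or.inl (by linarith)), sub_add_cancel,
    Real.zero_rpow hq.ne', sub_zero]
  filter_upwards [ae_restrict_mem measurableSet_Ioo] with s hs
  exact Real.rpow_nonneg hs.1.le _

lemma truncMoment_le_of_upperTail_le (hf : Measurable f) (hx : 0 < x) (hp : 0 < p) (hβp : β < p)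
    {M : ℝ≥0∞}
    (hM : ∀ s, 0 < s → s ≤ x → upperTail P f s ≤ M * ENNReal.ofReal ((x / s) ^ β)) :
    truncMoment P f p x ≤ M * ENNReal.ofReal (p / (p - β)) * ENNReal.ofReal x ^ p := by
  have hpβ : 0 < p - β := sub_pos.2 hβp
  have hintegrand {s : ℝ} (hs : s ∈ Set.Ioo 0 x) :
      upperTail P f s * ENNReal.ofReal (s ^ (p - 1)) ≤
        M * ENNReal.ofReal (x ^ β) * ENNReal.ofReal (s ^ (p - β - 1)) := by
    have hs₀ : 0 < s := hs.1
    have hpow : (x / s) ^ β * s ^ (p - 1) = x ^ β * s ^ (p - β - 1) := by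
      rw [Real.div_rpow hx.le hs₀.le, sub_right_comm, Real.rpow_sub hs₀ (p - 1) β]
      ring
    grw [hM s hs₀ hs.2.le]
    rw [mul_assoc, mul_assoc, ← ENNReal.ofReal_mul (by positivity), hpow,
      ENNReal.ofReal_mul (by positivity)]
  have hconst : p * (x ^ β * (x ^ (p - β) / (p - β))) = p / (p - β) * x ^ p := by
    rw [← mul_div_assoc, ← Real.rpow_add hx, add_sub_cancel]
    ring
  calc truncMoment P f p x
      ≤ ENNReal.ofReal p * ∫⁻ s in Set.Ioo 0 x,
          M * ENNReal.ofReal (x ^ β) * ENNReal.ofReal (s ^ (p - β - 1)) := by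
        rw [truncMoment_eq_lintegral_upperTail hf hp]
        gcongr ENNReal.ofReal p * ?_
        exact setLIntegral_mono' measurableSet_Ioo fun s hs => hintegrand hs
    _ = M * ENNReal.ofReal (p * (x ^ β * (x ^ (p - β) / (p - β)))) := by
        rw [lintegral_const_mul _ (by fun_prop), lintegral_Ioo_rpow_sub_one hpβ hx.le,
          ENNReal.ofReal_mul hp.le, ENNReal.ofReal_mul (p := x ^ β) (by positivity)]
        ring
    _ = M * ENNReal.ofReal (p / (p - β)) * ENNReal.ofReal x ^ p := by
        rw [hconst, ENNReal.ofReal_mul (by positivity), ENNReal.ofReal_rpow_of_pos hx, mul_assoc]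

end LayerCake

section SingleBigJump

variable {P : Measure Ω} {ι : Type*}

lemma sum_measure_le_measure_biUnion_add {A : ι → Set Ω}
    (hA : ∀ i, MeasurableSet (A i)) (s : Finset ι) :
    ∑ i ∈ s, P (A i) ≤ P (⋃ i ∈ s, A i) + ∑ q ∈ s.offDiag, P (A q.1 ∩ A q.2) := by
  classical
  let U (i : ι) : Set Ω := ⋃ j ∈ s.erase i, A j
  have hU (i : ι) : MeasurableSet (U i) := Finset.measurableSet_biUnion _ fun j _ => hA j
  have hdisj : (s : Set ι).PairwiseDisjoint fun i => A i \ U i := by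
    intro i hi j _ hij
    refine Set.disjoint_left.2 fun ω hωi hωj => hωj.2 ?_
    exact Set.mem_biUnion (Finset.mem_erase.2 ⟨hij, hi⟩) hωi.1
  have hsplit (i : ι) : P (A i) ≤ P (A i \ U i) + ∑ j ∈ s.erase i, P (A i ∩ A j) := by
    rw [← measure_sdiff_add_inter (A i) (hU i), Set.inter_iUnion₂]
    gcongr
    exact measure_biUnion_finset_le _ _
  calc ∑ i ∈ s, P (A i)
      ≤ ∑ i ∈ s, P (A i \ U i) + ∑ i ∈ s, ∑ j ∈ s.erase i, P (A i ∩ A j) := by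
        rw [← Finset.sum_add_distrib]
        exact Finset.sum_le_sum fun i _ => hsplit i
    _ ≤ P (⋃ i ∈ s, A i) + ∑ q ∈ s.offDiag, P (A q.1 ∩ A q.2) := by
        rw [← measure_biUnion_finset hdisj fun i _ => (hA i).diff (hU i),
          Finset.sum_finset_product s.offDiag s (fun i => s.erase i) (by grind)]
        gcongr
        exact Set.sdiff_subset

lemma sum_upperTail_le {V : ι → Ω → ℝ≥0∞} (hV : ∀ i, Measurable (V i))
    (s : Finset ι) (x : ℝ) :
    ∑ i ∈ s, upperTail P (V i) x ≤ upperTail P (fun ω => ∑' i, V i ω) x +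
      ∑ q ∈ s.offDiag, upperTail P (fun ω => min (V q.1 ω) (V q.2 ω)) x := by
  refine (sum_measure_le_measure_biUnion_add
    (fun i => measurableSet_lt measurable_const (hV i)) s).trans (add_le_add ?_ ?_)
  · refine measure_mono (Set.iUnion₂_subset fun i _ ω hω => ?_)
    exact lt_of_lt_of_le hω (ENNReal.le_tsum (f := fun i => V i ω) i)
  · simp only [upperTail, lt_min_iff, Set.ofPred_and, le_refl]

lemma exists_lt_of_add_lt_tsum {v : ι → ℝ≥0∞} {a b c : ℝ≥0∞} {s : Finset ι}
    (h : a + s.card * b + c < ∑' i, v i) :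
    (∃ i ∈ s, a < v i) ∨ (∃ q ∈ s.offDiag, b < min (v q.1) (v q.2)) ∨
      c < ∑' i : {i // i ∉ s}, v i := by
  classical
  by_contra! hcon
  obtain ⟨hone, htwo, hrest⟩ := hcon
  refine h.not_ge ?_
  rw [← ENNReal.sum_add_tsum_compl s v]
  refine add_le_add ?_ hrest
  by_cases hbig : ∃ i ∈ s, b < v i
  · obtain ⟨i, hi, hbi⟩ := hbig
    have hothers : ∀ j ∈ s.erase i, v j ≤ b := fun j hj => by
      obtain ⟨hji, hj⟩ := Finset.mem_erase.1 hj
      exact (min_le_iff.1 (htwo (i, j) (Finset.mem_offDiag.2 ⟨hi, hj, hji.symm⟩))).resolve_left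
        hbi.not_ge
    calc ∑ j ∈ s, v j = v i + ∑ j ∈ s.erase i, v j := (Finset.add_sum_erase s v hi).symm
      _ ≤ a + ∑ _ ∈ s, b := add_le_add (hone i hi) <|
          (Finset.sum_le_sum hothers).trans (Finset.sum_le_sum_of_subset (Finset.erase_subset i s))
      _ = a + s.card * b := by simp
  · push Not at hbig
    calc ∑ j ∈ s, v j ≤ ∑ _ ∈ s, b := Finset.sum_le_sum hbig
      _ = s.card * b := by simp
      _ ≤ a + s.card * b := le_add_self

lemma upperTail_tsum_le (V : ι → Ω → ℝ≥0∞) (s : Finset ι) {a b c x : ℝ}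
    (ha : 0 ≤ a) (hb : 0 ≤ b) (hc : 0 ≤ c) (hx : a + s.card * b + c ≤ x) :
    upperTail P (fun ω => ∑' i, V i ω) x ≤ ∑' i, upperTail P (V i) a +
      (∑ q ∈ s.offDiag, upperTail P (fun ω => min (V q.1 ω) (V q.2 ω)) b +
        upperTail P (fun ω => ∑' i : {i // i ∉ s}, V i ω) c) := by
  have hlevel : ENNReal.ofReal a + s.card * ENNReal.ofReal b + ENNReal.ofReal c ≤
      ENNReal.ofReal x := by
    rw [← ENNReal.ofReal_natCast, ← ENNReal.ofReal_mul (by positivity),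
      ← ENNReal.ofReal_add ha (by positivity), ← ENNReal.ofReal_add (by positivity) hc]
    exact ENNReal.ofReal_le_ofReal hx
  have hcover : {ω | ENNReal.ofReal x < ∑' i, V i ω} ⊆
      (⋃ i ∈ s, {ω | ENNReal.ofReal a < V i ω}) ∪
        ((⋃ q ∈ s.offDiag, {ω | ENNReal.ofReal b < min (V q.1 ω) (V q.2 ω)}) ∪
          {ω | ENNReal.ofReal c < ∑' i : {i // i ∉ s}, V i ω}) := fun ω hω => by
    simpa only [Set.mem_union, Set.mem_iUnion, Set.mem_ofPred_eq, exists_prop] using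
      exists_lt_of_add_lt_tsum (hlevel.trans_lt hω)
  refine (measure_mono hcover).trans ((measure_union_le _ _).trans (add_le_add ?_ ?_))
  · exact (measure_biUnion_finset_le _ _).trans (ENNReal.sum_le_tsum s)
  · exact (measure_union_le _ _).trans (add_le_add_left (measure_biUnion_finset_le _ _) _)

lemma RegVarying.ennreal_ne_zero {G : ℝ → ℝ≥0∞} {ρ x : ℝ}
    (h : RegVarying (fun x => (G x).toReal) ρ) (hx : 0 < x) : G x ≠ 0 :=
  (ENNReal.toReal_pos_iff.1 (h.1 x hx)).1.ne'

lemma RegVarying.ennreal_ne_top {G : ℝ → ℝ≥0∞} {ρ x : ℝ}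
    (h : RegVarying (fun x => (G x).toReal) ρ) (hx : 0 < x) : G x ≠ ∞ :=
  (ENNReal.toReal_pos_iff.1 (h.1 x hx)).2.ne

lemma RegVarying.tendsto_ennreal_div {G : ℝ → ℝ≥0∞} {ρ c : ℝ}
    (h : RegVarying (fun x => (G x).toReal) ρ) (hc : 0 < c) :
    Tendsto (fun x => G (c * x) / G x) atTop (𝓝 (ENNReal.ofReal (c ^ ρ))) := by
  refine (ENNReal.tendsto_ofReal (h.2 c hc)).congr' ?_
  filter_upwards [eventually_gt_atTop 0] with x hx
  rw [ENNReal.ofReal_div_of_pos (h.1 x hx), ENNReal.ofReal_toReal (h.ennreal_ne_top hx),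
    ENNReal.ofReal_toReal (h.ennreal_ne_top (mul_pos hc hx))]

lemma RegVarying.tendsto_comp_mul_div_zero {G H : ℝ → ℝ≥0∞} {ρ c : ℝ}
    (h : RegVarying (fun x => (G x).toReal) ρ) (hH : Tendsto (fun x => H x / G x) atTop (𝓝 0))
    (hc : 0 < c) :
    Tendsto (fun x => H (c * x) / G x) atTop (𝓝 0) := by
  have hprod := ENNReal.Tendsto.mul (hH.comp (tendsto_id.const_mul_atTop hc))
    (Or.inr ENNReal.ofReal_ne_top) (h.tendsto_ennreal_div hc) (Or.inr ENNReal.zero_ne_top)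
  rw [zero_mul] at hprod
  refine hprod.congr' ?_
  filter_upwards [eventually_gt_atTop 0] with x hx
  have hcx : 0 < c * x := mul_pos hc hx
  simp only [Function.comp_apply, id]
  rw [← mul_div_assoc, ENNReal.div_mul_cancel (h.ennreal_ne_zero hcx) (h.ennreal_ne_top hcx)]

lemma RegVarying.limsup_div_le {D G J : ℝ → ℝ≥0∞} {ρ : ℝ} {r : ℝ≥0∞}
    (h : RegVarying (fun x => (G x).toReal) ρ) (hJ : Tendsto (fun x => J x / G x) atTop (𝓝 0))
    (hD : ∀ᶠ x in atTop, D x ≤ G x + J x + r * G x) :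
    limsup (fun x => D x / G x) atTop ≤ 1 + r := by
  have hlim : Tendsto (fun x => 1 + J x / G x + r) atTop (𝓝 (1 + r)) := by
    simpa using (hJ.const_add 1).add_const r
  rw [← hlim.limsup_eq]
  refine limsup_le_limsup ?_
  filter_upwards [hD, eventually_gt_atTop 0] with x hx hx₀
  refine ENNReal.div_le_of_le_mul ?_
  rwa [add_mul, add_mul, one_mul,
    ENNReal.div_mul_cancel (h.ennreal_ne_zero hx₀) (h.ennreal_ne_top hx₀)]

lemma RegVarying.le_liminf_div_add {D G J : ℝ → ℝ≥0∞} {ρ a b c : ℝ} {r : ℝ≥0∞}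
    (h : RegVarying (fun x => (G x).toReal) ρ) (hJ : Tendsto (fun x => J x / G x) atTop (𝓝 0))
    (ha : 0 < a) (hb : 0 < b) (hc : 0 < c)
    (hG : ∀ᶠ x in atTop, G (a * x) ≤ D x + (J (b * x) + r * G (c * x))) :
    ENNReal.ofReal (a ^ ρ) ≤ liminf (fun x => D x / G x) atTop + r * ENNReal.ofReal (c ^ ρ) := by
  have herror : Tendsto (fun x => J (b * x) / G x + r * (G (c * x) / G x)) atTop
      (𝓝 (r * ENNReal.ofReal (c ^ ρ))) := by
    have hrest := ENNReal.Tendsto.const_mul (a := r) (h.tendsto_ennreal_div hc)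
      (Or.inl (ENNReal.ofReal_pos.2 (Real.rpow_pos_of_pos hc ρ)).ne')
    simpa using (h.tendsto_comp_mul_div_zero hJ hb).add hrest
  have hlim := ENNReal.Tendsto.sub (h.tendsto_ennreal_div ha) herror
    (Or.inl ENNReal.ofReal_ne_top)
  rw [← tsub_le_iff_right, ← hlim.liminf_eq]
  refine liminf_le_liminf ?_
  filter_upwards [hG] with x hx
  rw [tsub_le_iff_right, ← mul_div_assoc, ← ENNReal.add_div, ← ENNReal.add_div]
  gcongr

lemma tendsto_sum_offDiag_div_zero {J : ι → ι → ℝ → ℝ≥0∞} {G : ℝ → ℝ≥0∞}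
    (hJ : Pairwise fun i j => Tendsto (fun x => J i j x / G x) atTop (𝓝 0)) (s : Finset ι) :
    Tendsto (fun x => (∑ q ∈ s.offDiag, J q.1 q.2 x) / G x) atTop (𝓝 0) := by
  have hlim := tendsto_finsetSum s.offDiag fun q hq => hJ (Finset.mem_offDiag.1 hq).2.2
  simpa only [div_eq_mul_inv, Finset.sum_mul, Finset.sum_const_zero] using hlim

section Series

variable {V : ι → Ω → ℝ≥0∞} {ρ : ℝ} {s : Finset ι} {r : ℝ≥0∞}

lemma limsup_tsum_upperTail_div_le (hV : ∀ i, Measurable (V i))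
    (hRV : RegVarying (fun x => (upperTail P (fun ω => ∑' i, V i ω) x).toReal) ρ)
    (hpair : Pairwise fun i j => Tendsto (fun x => upperTail P (fun ω => min (V i ω) (V j ω)) x /
      upperTail P (fun ω => ∑' i, V i ω) x) atTop (𝓝 0))
    (htails : ∀ᶠ x in atTop, ∑' i : {i // i ∉ s}, upperTail P (V i) x ≤
      r * upperTail P (fun ω => ∑' i, V i ω) x) :
    limsup (fun x => (∑' i, upperTail P (V i) x) / upperTail P (fun ω => ∑' i, V i ω) x) atTop ≤
      1 + r := by
  refine hRV.limsup_div_le (tendsto_sum_offDiag_div_zero hpair s) ?_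
  filter_upwards [htails] with x hx
  rw [← ENNReal.sum_add_tsum_compl s]
  exact add_le_add (sum_upperTail_le hV s x) hx

-- One term exceeds `x`, or two terms exceed `δ x / (#s + 1)`, or the remainder exceeds `δ x`.
lemma ofReal_rpow_le_liminf_tsum_upperTail_div_add
    (hRV : RegVarying (fun x => (upperTail P (fun ω => ∑' i, V i ω) x).toReal) ρ)
    (hpair : Pairwise fun i j => Tendsto (fun x => upperTail P (fun ω => min (V i ω) (V j ω)) x /
      upperTail P (fun ω => ∑' i, V i ω) x) atTop (𝓝 0))
    (hrest : ∀ᶠ x in atTop, upperTail P (fun ω => ∑' i : {i // i ∉ s}, V i ω) x ≤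
      r * upperTail P (fun ω => ∑' i, V i ω) x) {δ : ℝ} (hδ : 0 < δ) :
    ENNReal.ofReal ((1 + 2 * δ) ^ ρ) ≤
      liminf (fun x => (∑' i, upperTail P (V i) x) / upperTail P (fun ω => ∑' i, V i ω) x) atTop +
        r * ENNReal.ofReal (δ ^ ρ) := by
  refine hRV.le_liminf_div_add (b := δ / (s.card + 1)) (tendsto_sum_offDiag_div_zero hpair s)
    (by positivity) (by positivity) hδ ?_
  filter_upwards [(tendsto_id.const_mul_atTop hδ).eventually hrest, eventually_ge_atTop 0]
    with x hx hx₀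
  have hsmall : s.card * (δ / (s.card + 1) * x) ≤ δ * x := by
    rw [← mul_assoc]
    gcongr
    rw [mul_div_left_comm]
    exact mul_le_of_le_one_right hδ.le ((div_le_one (by positivity)).2 (by linarith))
  refine (upperTail_tsum_le V s hx₀ (by positivity) (by positivity)
    (b := δ / (s.card + 1) * x) (c := δ * x) (by linarith)).trans ?_
  gcongr
  exact hx

lemma one_le_liminf_tsum_upperTail_div {r : Finset ι → ℝ≥0∞}
    (hRV : RegVarying (fun x => (upperTail P (fun ω => ∑' i, V i ω) x).toReal) ρ)
    (hpair : Pairwise fun i j => Tendsto (fun x => upperTail P (fun ω => min (V i ω) (V j ω)) x /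
      upperTail P (fun ω => ∑' i, V i ω) x) atTop (𝓝 0))
    (hr : Tendsto r atTop (𝓝 0))
    (hrest : ∀ s, ∀ᶠ x in atTop, upperTail P (fun ω => ∑' i : {i // i ∉ s}, V i ω) x ≤
      r s * upperTail P (fun ω => ∑' i, V i ω) x) :
    1 ≤ liminf (fun x => (∑' i, upperTail P (V i) x) / upperTail P (fun ω => ∑' i, V i ω) x)
      atTop := by
  set L := liminf (fun x => (∑' i, upperTail P (V i) x) /
    upperTail P (fun ω => ∑' i, V i ω) x) atTop
  have hδ (δ : ℝ) (hδ : 0 < δ) : ENNReal.ofReal ((1 + 2 * δ) ^ ρ) ≤ L := by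
    have hlim : Tendsto (fun s => L + r s * ENNReal.ofReal (δ ^ ρ)) atTop (𝓝 L) := by
      simpa using (ENNReal.Tendsto.mul_const hr (Or.inr ENNReal.ofReal_ne_top)).const_add L
    exact ge_of_tendsto' hlim fun s =>
      ofReal_rpow_le_liminf_tsum_upperTail_div_add hRV hpair (hrest s) hδ
  have hcont : ContinuousAt (fun δ : ℝ => ENNReal.ofReal ((1 + 2 * δ) ^ ρ)) 0 :=
    ENNReal.continuous_ofReal.continuousAt.comp
      (ContinuousAt.rpow_const (by fun_prop) (Or.inl (by norm_num)))
  have hlim : Tendsto (fun δ : ℝ => ENNReal.ofReal ((1 + 2 * δ) ^ ρ)) (𝓝[>] 0) (𝓝 1) := by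
    simpa using hcont.tendsto.mono_left nhdsWithin_le_nhds
  exact le_of_tendsto hlim (eventually_mem_nhdsWithin.mono hδ)

theorem tendsto_tsum_upperTail_div {r : Finset ι → ℝ≥0∞} (hV : ∀ i, Measurable (V i))
    (hRV : RegVarying (fun x => (upperTail P (fun ω => ∑' i, V i ω) x).toReal) ρ)
    (hpair : Pairwise fun i j => Tendsto (fun x => upperTail P (fun ω => min (V i ω) (V j ω)) x /
      upperTail P (fun ω => ∑' i, V i ω) x) atTop (𝓝 0))
    (hr : Tendsto r atTop (𝓝 0))
    (hrest : ∀ s, ∀ᶠ x in atTop, upperTail P (fun ω => ∑' i : {i // i ∉ s}, V i ω) x ≤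
      r s * upperTail P (fun ω => ∑' i, V i ω) x)
    (htails : ∀ s, ∀ᶠ x in atTop, ∑' i : {i // i ∉ s}, upperTail P (V i) x ≤
      r s * upperTail P (fun ω => ∑' i, V i ω) x) :
    Tendsto (fun x => (∑' i, upperTail P (V i) x) / upperTail P (fun ω => ∑' i, V i ω) x) atTop
      (𝓝 1) := by
  refine tendsto_of_le_liminf_of_limsup_le
    (one_le_liminf_tsum_upperTail_div hRV hpair hr hrest) ?_
  have hlim : Tendsto (fun s => 1 + r s) atTop (𝓝 1) := by simpa using hr.const_add 1
  exact ge_of_tendsto' hlim fun s => limsup_tsum_upperTail_div_le hV hRV hpair (htails s)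

theorem tendsto_tsum_upperTail_div_of_truncMoment_le [Countable ι] {p : ℝ} {K : ℝ≥0∞}
    {m : ι → ℝ≥0∞} (hV : ∀ i, Measurable (V i))
    (hRV : RegVarying (fun x => (upperTail P (fun ω => ∑' i, V i ω) x).toReal) ρ)
    (hpair : Pairwise fun i j => Tendsto (fun x => upperTail P (fun ω => min (V i ω) (V j ω)) x /
      upperTail P (fun ω => ∑' i, V i ω) x) atTop (𝓝 0))
    (hp : 1 ≤ p) (hm : ∑' i, m i ^ (1 / p) ≠ ∞) (hK : K ≠ ∞)
    (hmom : ∀ᶠ x in atTop, ∀ i, truncMoment P (V i) p x ≤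
      m i * (K * upperTail P (fun ω => ∑' i, V i ω) x) * ENNReal.ofReal x ^ p) :
    Tendsto (fun x => (∑' i, upperTail P (V i) x) / upperTail P (fun ω => ∑' i, V i ω) x) atTop
      (𝓝 1) := by
  have hp₀ : 0 < p := zero_lt_one.trans_le hp
  have hr : Tendsto (fun s : Finset ι => (∑' i : {i // i ∉ s}, m i ^ (1 / p)) ^ p * K) atTop
      (𝓝 0) := by
    have hrpow := (ENNReal.tendsto_tsum_compl_atTop_zero hm).ennrpow_const p
    rw [ENNReal.zero_rpow_of_pos hp₀] at hrpow
    simpa using ENNReal.Tendsto.mul_const hrpow (Or.inr hK)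
  refine tendsto_tsum_upperTail_div hV hRV hpair hr (fun s => ?_) fun s => ?_
  all_goals
    filter_upwards [hmom, eventually_gt_atTop 0] with x hx hx₀
    rw [mul_assoc]
  · exact upperTail_tsum_le_of_truncMoment_le (fun i => hV i) hp hx₀ fun i => hx i
  · exact tsum_upperTail_le_of_truncMoment_le (fun i => hV i) hp hx₀ fun i => hx i

end Series

end SingleBigJump

section IndependentProducts

variable {P : Measure Ω} {Z : Ω → ℝ} {W : Ω → ℝ≥0∞} {β γ x : ℝ}

lemma upperTail_mul_eq_lintegral [IsFiniteMeasure P] (hZ : Measurable Z) (hW : Measurable W)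
    (hind : IndepFun Z W P) (hpos : ∀ᵐ ω ∂P, 0 < Z ω) (x : ℝ) :
    upperTail P (fun ω => ENNReal.ofReal (Z ω) * W ω) x = ∫⁻ ω, upperTail P W (x / Z ω) ∂P := by
  have hS : MeasurableSet {q : ℝ × ℝ≥0∞ | ENNReal.ofReal x < ENNReal.ofReal q.1 * q.2} :=
    measurableSet_lt measurable_const (by fun_prop)
  calc upperTail P (fun ω => ENNReal.ofReal (Z ω) * W ω) x
      = ((P.map Z).prod (P.map W)) {q | ENNReal.ofReal x < ENNReal.ofReal q.1 * q.2} := by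
        rw [← (indepFun_iff_map_prod_eq_prod_map_map hZ.aemeasurable hW.aemeasurable).1 hind,
          Measure.map_apply (hZ.prodMk hW) hS]
        rfl
    _ = ∫⁻ ω, P {ω' | ENNReal.ofReal x < ENNReal.ofReal (Z ω) * W ω'} ∂P := by
        rw [Measure.prod_apply hS, lintegral_map (measurable_measure_prodMk_left hS) hZ]
        refine lintegral_congr fun ω => ?_
        rw [Measure.map_apply hW (measurable_prodMk_left hS)]
        rfl
    _ = ∫⁻ ω, upperTail P W (x / Z ω) ∂P := by
        refine lintegral_congr_ae ?_
        filter_upwards [hpos] with ω hω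
        have hω' : ENNReal.ofReal (Z ω) ≠ 0 := (ENNReal.ofReal_pos.2 hω).ne'
        simp only [upperTail, ENNReal.ofReal_div_of_pos hω, ENNReal.div_lt_iff (.inl hω')
          (.inl ENNReal.ofReal_ne_top), mul_comm (W _)]

lemma upperTail_mul_le [IsFiniteMeasure P] (hZ : Measurable Z) (hW : Measurable W)
    (hind : IndepFun Z W P) (hpos : ∀ᵐ ω ∂P, 0 < Z ω) {M : ℝ≥0∞} (hγβ : γ ≤ β) (hx : 0 < x)
    (hM : ∀ y, 0 < y → upperTail P W y ≤ M * ENNReal.ofReal (potterWeight β γ (x / y)))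
    {s : ℝ} (hs : 0 < s) (hsx : s ≤ x) :
    upperTail P (fun ω => ENNReal.ofReal (Z ω) * W ω) s ≤
      (momE P Z β + momE P Z γ) * M * ENNReal.ofReal ((x / s) ^ β) := by
  rw [upperTail_mul_eq_lintegral hZ hW hind hpos, ← lintegral_potterWeight hZ hpos, mul_assoc,
    ← lintegral_mul_const _ (by fun_prop)]
  refine lintegral_mono_ae ?_
  filter_upwards [hpos] with ω hω
  have hweight := potterWeight_mul_le_rpow_mul hγβ ((one_le_div hs).2 hsx) hω.le
  grw [hM _ (by positivity), div_div_eq_mul_div, ← div_mul_eq_mul_div, hweight,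
    ENNReal.ofReal_mul (by positivity)]
  exact le_of_eq (by ring)

lemma truncMoment_mul_le [IsFiniteMeasure P] (hZ : Measurable Z) (hW : Measurable W)
    (hind : IndepFun Z W P) (hpos : ∀ᵐ ω ∂P, 0 < Z ω) {M : ℝ≥0∞} {p : ℝ} (hγβ : γ ≤ β)
    (hβp : β < p) (hp : 0 < p) (hx : 0 < x)
    (hM : ∀ y, 0 < y → upperTail P W y ≤ M * ENNReal.ofReal (potterWeight β γ (x / y))) :
    truncMoment P (fun ω => ENNReal.ofReal (Z ω) * W ω) p x ≤
      (momE P Z β + momE P Z γ) * (M * ENNReal.ofReal (p / (p - β))) * ENNReal.ofReal x ^ p := by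
  rw [← mul_assoc]
  exact truncMoment_le_of_upperTail_le (by fun_prop) hx hp hβp fun s hs hsx =>
    upperTail_mul_le hZ hW hind hpos hγβ hx hM hs hsx

-- Breiman's argument: condition on `Z` and dominate the integrand by a multiple of the Potter
-- weight of `Z`.
lemma PotterDominated.tendsto_upperTail_mul_div_zero [IsFiniteMeasure P] {F G : ℝ → ℝ≥0∞}
    (h : PotterDominated β γ F G) (hZ : Measurable Z) (hW : Measurable W)
    (hind : IndepFun Z W P) (hpos : ∀ᵐ ω ∂P, 0 < Z ω) (hβ : momE P Z β ≠ ∞) (hγ : momE P Z γ ≠ ∞)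
    (hF : ∀ y, F y ≠ ∞) (hWF : ∀ y, upperTail P W y ≤ F y)
    (hlim : Tendsto (fun y => upperTail P W y / F y) atTop (𝓝 0)) :
    Tendsto (fun x => upperTail P (fun ω => ENNReal.ofReal (Z ω) * W ω) x / G x) atTop (𝓝 0) := by
  obtain ⟨K, hK, hbound⟩ := h
  have hmeas (x : ℝ) : Measurable fun ω => upperTail P W (x / Z ω) :=
    (antitone_upperTail P W).measurable.comp (measurable_const.div hZ)
  have hratio : ∀ᶠ x in atTop, ∀ z, 0 < z →
      F (x / z) / G x ≤ K * ENNReal.ofReal (potterWeight β γ z) := by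
    filter_upwards [hbound, eventually_gt_atTop 0] with x hx hx₀ z hz
    refine ENNReal.div_le_of_le_mul ((hx _ (by positivity)).trans_eq ?_)
    rw [div_div_cancel₀ hx₀.ne', mul_right_comm]
  simp only [upperTail_mul_eq_lintegral hZ hW hind hpos, div_eq_mul_inv (lintegral P _),
    ← lintegral_mul_const _ (hmeas _), ← div_eq_mul_inv]
  rw [← lintegral_zero (μ := P)]
  refine tendsto_lintegral_filter_of_dominated_convergence
    (fun ω => K * ENNReal.ofReal (potterWeight β γ (Z ω)))
    (.of_forall fun x => (hmeas x).div_const _) ?_ ?_ ?_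
  · filter_upwards [hratio] with x hx
    filter_upwards [hpos] with ω hω
    exact (ENNReal.div_le_div_right (hWF _) _).trans (hx _ hω)
  · rw [lintegral_const_mul _ (by fun_prop),
      lintegral_potterWeight hZ hpos]
    finiteness
  · filter_upwards [hpos] with ω hω
    have hprod := ENNReal.Tendsto.mul_const (b := K * ENNReal.ofReal (potterWeight β γ (Z ω)))
      (hlim.comp (tendsto_id.atTop_div_const hω)) (.inr (by finiteness))
    rw [zero_mul] at hprod
    refine tendsto_of_tendsto_of_tendsto_of_le_of_le' tendsto_const_nhds hprod
      (.of_forall fun _ => zero_le) ?_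
    filter_upwards [hratio] with x hx
    refine le_trans ?_ (mul_le_mul_right (hx _ hω) _)
    simp only [Function.comp_apply, id]
    rw [← mul_div_assoc, ENNReal.div_mul_cancel' (fun h₀ => le_zero_iff.1 (h₀ ▸ hWF _))
      fun htop => absurd htop (hF _)]

lemma measure_mul_upperTail_le_upperTail_mul (hind : IndepFun Z W P) {c y : ℝ} (hc : 0 ≤ c) :
    P {ω | c < Z ω} * upperTail P W y ≤
      upperTail P (fun ω => ENNReal.ofReal (Z ω) * W ω) (c * y) := by
  have hinter : P ({ω | c < Z ω} ∩ {ω | ENNReal.ofReal y < W ω}) =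
      P {ω | c < Z ω} * upperTail P W y :=
    hind.measure_inter_preimage_eq_mul _ _ measurableSet_Ioi measurableSet_Ioi
  rw [← hinter]
  refine measure_mono fun ω hω => ?_
  have hZc : ENNReal.ofReal c < ENNReal.ofReal (Z ω) :=
    (ENNReal.ofReal_lt_ofReal_iff_of_nonneg hc).2 hω.1
  rw [Set.mem_ofPred_eq, ENNReal.ofReal_mul hc]
  exact ENNReal.mul_lt_mul hZc hω.2

lemma exists_pos_measure_lt_ne_zero [NeZero P] (hpos : ∀ᵐ ω ∂P, 0 < Z ω) :
    ∃ c, 0 < c ∧ P {ω | c < Z ω} ≠ 0 := by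
  have hunion : P (⋃ n : ℕ, {ω | 1 / ((n : ℝ) + 1) < Z ω}) ≠ 0 := by
    intro hzero
    obtain ⟨ω, hω, hZω⟩ := ((measure_eq_zero_iff_ae_notMem.1 hzero).and hpos).exists
    exact hω (Set.mem_iUnion.2 (exists_nat_one_div_lt hZω))
  obtain ⟨n, hn⟩ := exists_measure_pos_of_not_measure_iUnion_null hunion
  exact ⟨1 / ((n : ℝ) + 1), Nat.one_div_pos_of_nat, hn.ne'⟩

lemma min_mul_mul_le_max_mul_min (a b c d : ℝ≥0∞) :
    min (a * c) (b * d) ≤ max a b * min c d := by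
  rcases min_choice c d with h | h <;> rw [h]
  · exact (min_le_left _ _).trans (mul_le_mul_left (le_max_left a b) c)
  · exact (min_le_right _ _).trans (mul_le_mul_left (le_max_right a b) d)

end IndependentProducts

section WeightedSums

variable {P : Measure Ω} {α β γ p : ℝ}

lemma RegVarying.potterDominated_upperTail [IsFiniteMeasure P] [NeZero P] {Z : Ω → ℝ}
    {W S : Ω → ℝ≥0∞} (h : RegVarying (fun x => (upperTail P S x).toReal) (-α))
    (hind : IndepFun Z W P) (hpos : ∀ᵐ ω ∂P, 0 < Z ω)
    (hle : (fun ω => ENNReal.ofReal (Z ω) * W ω) ≤ᵐ[P] S)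
    (hγ₀ : 0 ≤ γ) (hγα : γ < α) (hαβ : α < β) :
    PotterDominated β γ (upperTail P W) (upperTail P S) := by
  obtain ⟨c, hc, hmass⟩ := exists_pos_measure_lt_ne_zero hpos
  have hS : PotterDominated β γ (upperTail P S) (upperTail P S) :=
    h.potterDominated (antitone_upperTail P S) (measure_ne_top P Set.univ)
      (fun _ => measure_mono (Set.subset_univ _)) hγ₀ hγα hαβ
  exact hS.of_mul_le hmass (measure_ne_top P _) hc fun y _ =>
    (measure_mul_upperTail_le_upperTail_mul hind hc.le).trans (upperTail_mono_ae hle _)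

lemma PotterDominated.tendsto_upperTail_min_mul_div_zero [IsFiniteMeasure P] {Z Z' : Ω → ℝ}
    {W W' : Ω → ℝ≥0∞} {G : ℝ → ℝ≥0∞} (h : PotterDominated β γ (upperTail P W) G)
    (hZ : Measurable Z) (hZ' : Measurable Z') (hW : Measurable W) (hW' : Measurable W')
    (hind : IndepFun (fun ω => (Z ω, Z' ω)) (fun ω => (W ω, W' ω)) P) (hpos : ∀ᵐ ω ∂P, 0 < Z ω)
    (hmom : momE P Z β + momE P Z γ ≠ ∞) (hmom' : momE P Z' β + momE P Z' γ ≠ ∞)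
    (hlim : Tendsto (fun x => upperTail P (fun ω => min (W ω) (W' ω)) x / upperTail P W x) atTop
      (𝓝 0)) :
    Tendsto (fun x => upperTail P
      (fun ω => min (ENNReal.ofReal (Z ω) * W ω) (ENNReal.ofReal (Z' ω) * W' ω)) x / G x) atTop
      (𝓝 0) := by
  obtain ⟨hβ, hγ⟩ := ENNReal.add_ne_top.1 hmom
  obtain ⟨hβ', hγ'⟩ := ENNReal.add_ne_top.1 hmom'
  have hmax := h.tendsto_upperTail_mul_div_zero (hZ.max hZ') (hW.min hW')
    (hind.comp (measurable_fst.max measurable_snd) (measurable_fst.min measurable_snd))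
    (hpos.mono fun _ hω => lt_max_of_lt_left hω)
    (ne_top_of_le_ne_top (by finiteness) (momE_max_le hZ β))
    (ne_top_of_le_ne_top (by finiteness) (momE_max_le hZ γ))
    (fun _ => upperTail_ne_top _) (upperTail_mono_ae (.of_forall fun _ => min_le_left _ _)) hlim
  refine tendsto_of_tendsto_of_tendsto_of_le_of_le tendsto_const_nhds hmax
    (fun _ => zero_le) fun x => ENNReal.div_le_div_right (upperTail_mono_ae ?_ x) _
  refine .of_forall fun ω => ?_
  simpa only [ENNReal.ofReal_max] using min_mul_mul_le_max_mul_min _ _ (W ω) (W' ω)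

lemma AsympIndep.tendsto_upperTail_min_div {X Y : Ω → ℝ} (h : AsympIndep P X Y) :
    Tendsto (fun x =>
      upperTail P (fun ω => min (ENNReal.ofReal (X ω)) (ENNReal.ofReal (Y ω))) x /
        upperTail P (fun ω => ENNReal.ofReal (X ω)) x) atTop (𝓝 0) := by
  have hlim := ENNReal.tendsto_ofReal h.1
  rw [ENNReal.ofReal_zero] at hlim
  refine hlim.congr' ?_
  filter_upwards [eventually_ge_atTop 0] with x hx
  have hratio : P {ω | x < X ω ∧ x < Y ω} / P {ω | x < X ω} ≤ 1 :=
    ENNReal.div_le_of_le_mul (by rw [one_mul]; exact measure_mono fun _ hω => hω.1)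
  simp only [← ENNReal.ofReal_min, upperTail_ofReal _ hx, lt_min_iff]
  rw [← ENNReal.toReal_div, ENNReal.ofReal_toReal (ne_top_of_le_ne_top ENNReal.one_ne_top hratio)]

theorem tendsto_tsum_upperTail_mul_div [IsProbabilityMeasure P] {ι : Type*} [Countable ι]
    {Θ : ι → Ω → ℝ} {Y : ι → Ω → ℝ≥0∞} {i₀ : ι}
    (hΘ : ∀ i, Measurable (Θ i)) (hY : ∀ i, Measurable (Y i)) (hpos : ∀ i, ∀ᵐ ω ∂P, 0 < Θ i ω)
    (htail : ∀ i, upperTail P (Y i) = upperTail P (Y i₀))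
    (hpair : Pairwise fun i j => Tendsto
      (fun x => upperTail P (fun ω => min (Y i ω) (Y j ω)) x / upperTail P (Y i) x) atTop (𝓝 0))
    (hind : IndepFun (fun ω i => Θ i ω) (fun ω i => Y i ω) P)
    (hRV : RegVarying
      (fun x => (upperTail P (fun ω => ∑' i, ENNReal.ofReal (Θ i ω) * Y i ω) x).toReal) (-α))
    (hγ₀ : 0 ≤ γ) (hγα : γ < α) (hαβ : α < β) (hβp : β < p) (hp : 1 ≤ p)
    (hmom : ∑' i, (momE P (Θ i) β + momE P (Θ i) γ) ^ (1 / p) ≠ ∞) :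
    Tendsto (fun x => (∑' i, upperTail P (fun ω => ENNReal.ofReal (Θ i ω) * Y i ω) x) /
      upperTail P (fun ω => ∑' i, ENNReal.ofReal (Θ i ω) * Y i ω) x) atTop (𝓝 1) := by
  have hp₀ : 0 < p := zero_lt_one.trans_le hp
  have hmom_ne_top (i : ι) : momE P (Θ i) β + momE P (Θ i) γ ≠ ∞ := fun htop =>
    ENNReal.ne_top_of_tsum_ne_top hmom i (by rw [htop, ENNReal.top_rpow_of_pos (by positivity)])
  have hind_single (i : ι) : IndepFun (Θ i) (Y i) P :=
    hind.comp (measurable_pi_apply i) (measurable_pi_apply i)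
  have hpotter (i : ι) := hRV.potterDominated_upperTail (hind_single i) (hpos i)
    (.of_forall fun ω => ENNReal.le_tsum (f := fun i => ENNReal.ofReal (Θ i ω) * Y i ω) i)
    hγ₀ hγα hαβ
  obtain ⟨K, hK, hbound⟩ := hpotter i₀
  refine tendsto_tsum_upperTail_div_of_truncMoment_le (K := K * ENNReal.ofReal (p / (p - β)))
    (fun i => (hΘ i).ennreal_ofReal.mul (hY i)) hRV (fun i j hij => ?_) hp hmom (by finiteness) ?_
  · exact (hpotter i).tendsto_upperTail_min_mul_div_zero (hΘ i) (hΘ j) (hY i) (hY j)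
      (hind.comp ((measurable_pi_apply i).prodMk (measurable_pi_apply j))
        ((measurable_pi_apply i).prodMk (measurable_pi_apply j)))
      (hpos i) (hmom_ne_top i) (hmom_ne_top j) (hpair hij)
  · filter_upwards [hbound, eventually_gt_atTop 0] with x hx hx₀ i
    rw [mul_right_comm K]
    exact truncMoment_mul_le (hΘ i) (hY i) (hind_single i) (hpos i) (hγα.trans hαβ).le hβp hp₀ hx₀
      (by simpa only [htail i] using hx)

-- `ENNReal.ofReal` truncates at `0`, so the series is that of the positive parts `Θ i * (X i)⁺`.
theorem stmt2_general [IsProbabilityMeasure P] {ι : Type*} [Countable ι] {X Θ : ι → Ω → ℝ} {i₀ : ι}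
    (hX : ∀ i, Measurable (X i)) (hΘ : ∀ i, Measurable (Θ i)) (hpos : ∀ i, ∀ᵐ ω ∂P, 0 < Θ i ω)
    (hident : ∀ i, IdentDistrib (X i) (X i₀) P P)
    (hpair : Pairwise fun i j => AsympIndep P (X i) (X j))
    (hind : IndepFun (fun ω i => Θ i ω) (fun ω i => X i ω) P)
    (hRV : RegVarying
      (fun x => (P {ω | ENNReal.ofReal x < ∑' i, ENNReal.ofReal (Θ i ω * X i ω)}).toReal) (-α))
    (hγ₀ : 0 ≤ γ) (hγα : γ < α) (hαβ : α < β) (hβp : β < p) (hp : 1 ≤ p)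
    (hmom : ∑' i, (momE P (Θ i) β + momE P (Θ i) γ) ^ (1 / p) ≠ ∞) :
    Tendsto (fun x => (∑' i, P {ω | x < Θ i ω * X i ω}).toReal /
      (P {ω | ENNReal.ofReal x < ∑' i, ENNReal.ofReal (Θ i ω * X i ω)}).toReal) atTop (𝓝 1) := by
  have hmul : ∀ᵐ ω ∂P, ∀ i, ENNReal.ofReal (Θ i ω * X i ω) =
      ENNReal.ofReal (Θ i ω) * ENNReal.ofReal (X i ω) := by
    filter_upwards [ae_all_iff.2 hpos] with ω hω i using ENNReal.ofReal_mul (hω i).le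
  have hterm (i : ι) : upperTail P (fun ω => ENNReal.ofReal (Θ i ω) * ENNReal.ofReal (X i ω)) =
      upperTail P (fun ω => ENNReal.ofReal (Θ i ω * X i ω)) :=
    upperTail_congr_ae (hmul.mono fun ω hω => (hω i).symm)
  have hsum : upperTail P (fun ω => ∑' i, ENNReal.ofReal (Θ i ω) * ENNReal.ofReal (X i ω)) =
      upperTail P (fun ω => ∑' i, ENNReal.ofReal (Θ i ω * X i ω)) :=
    upperTail_congr_ae (hmul.mono fun ω hω => tsum_congr fun i => (hω i).symm)
  have hlim := tendsto_tsum_upperTail_mul_div (Y := fun i ω => ENNReal.ofReal (X i ω)) (i₀ := i₀)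
    hΘ (fun i => (hX i).ennreal_ofReal) hpos
    (fun i => funext fun x => ((hident i).comp ENNReal.measurable_ofReal).measure_mem_eq
      measurableSet_Ioi)
    (fun i j hij => (hpair hij).tendsto_upperTail_min_div)
    (hind.comp measurable_id (by fun_prop : Measurable fun (x : ι → ℝ) i => ENNReal.ofReal (x i)))
    (by rw [hsum]; exact hRV) hγ₀ hγα hαβ hβp hp hmom
  rw [← ENNReal.toReal_one]
  refine ((ENNReal.tendsto_toReal ENNReal.one_ne_top).comp hlim).congr' ?_
  filter_upwards [eventually_ge_atTop 0] with x hx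
  simp only [Function.comp_apply, ENNReal.toReal_div, hterm, hsum, upperTail_ofReal _ hx]
  rfl

end WeightedSums

/-- Proposition 4.4: if the `X_t` are identically distributed, pairwise asymptotically
independent and positive, the positive weights `Θ_t` (independent of `{X_t}`) satisfy the
RW moment conditions, and `X_(∞) = Σ_t Θ_t X_t` is finite a.s. with a regularly varying
tail of index `-α`, then `Σ_t P[Θ_t X_t > x] ~ P[X_(∞) > x]` as `x → ∞`. -/
theorem stmt2 {Ω : Type*} [MeasurableSpace Ω] (P : Measure Ω) [IsProbabilityMeasure P]
    (X Θ : ℕ → Ω → ℝ) (α : ℝ) (hα : 0 < α)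
    (hXmeas : ∀ t, Measurable (X t)) (hΘmeas : ∀ t, Measurable (Θ t))
    (hXpos : ∀ t, ∀ᵐ ω ∂P, 0 < X t ω) (hΘpos : ∀ t, ∀ᵐ ω ∂P, 0 < Θ t ω)
    (hident : ∀ t, IdentDistrib (X t) (X 0) P P)
    (hpair : ∀ s t : ℕ, s ≠ t → AsympIndep P (X s) (X t))
    (hindep : IndepFun (fun ω => fun t => Θ t ω) (fun ω => fun t => X t ω) P)
    (hfin : ∀ᵐ ω ∂P, (∑' t : ℕ, ENNReal.ofReal (Θ t ω * X t ω)) ≠ ⊤)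
    (hRV : RegVarying
      (fun x : ℝ =>
        (P {ω | ENNReal.ofReal x < ∑' t : ℕ, ENNReal.ofReal (Θ t ω * X t ω)}).toReal)
      (-α))
    (hRW : RWConditions P Θ α) :
    Tendsto (fun x : ℝ =>
        (∑' t : ℕ, P {ω | x < Θ t ω * X t ω}).toReal /
          (P {ω | ENNReal.ofReal x < ∑' t : ℕ, ENNReal.ofReal (Θ t ω * X t ω)}).toReal)
      atTop (nhds 1) := by
  obtain ⟨p, β, γ, hp, hγ₀, hγα, hαβ, hβp, hmom⟩ := hRW.exists_exponents hΘmeas hΘpos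
  exact stmt2_general hXmeas hΘmeas hΘpos hident (fun s t => hpair s t) hindep hRV
    hγ₀ hγα hαβ hβp hp hmom
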